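/- arXiv:2201.01345 — 6 statements merged into one kernel-verified Lean document; each statement's English description precedes it below -/
import Mathlib

section
/- (Corollary 1, for real matrix polynomials) A left ideal I of the ring A = M_n(ℝ[x₁, …, x_d]), equipped with the transpose involution P* = Pᵀ, is real if and only if it is strongly real, i.e., whenever A₁, …, A_k ∈ A satisfy A₁*A₁ + ⋯ + A_k*A_k ∈ I + I*, where I* = {X* : X ∈ I}, then A₁, …, A_k ∈ I. -/
open MvPolynomial Matrix

/-- A left ideal `I` of `Mₙ(ℝ[x₁,…,x_d])` with the transpose involution is *real* if whenever
`(A 0)ᵀ * A 0 + ⋯ + (A (k-1))ᵀ * A (k-1) ∈ I`, each `A i` lies in `I`. -/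
def Ideal.IsRealLeftIdealT {R : Type*} [CommRing R] {n : ℕ}
    (I : Ideal (Matrix (Fin n) (Fin n) R)) : Prop :=
  ∀ (k : ℕ) (A : Fin k → Matrix (Fin n) (Fin n) R),
    (∑ i, (A i)ᵀ * A i) ∈ I → ∀ i, A i ∈ I

/-- A left ideal `I` of `Mₙ(ℝ[x₁,…,x_d])` with the transpose involution is *strongly real*
if whenever `(A 0)ᵀ * A 0 + ⋯ + (A (k-1))ᵀ * A (k-1) ∈ I + I*` (where
`I* = {Xᵀ : X ∈ I}`), each `A i` lies in `I`. -/
def Ideal.IsStronglyRealLeftIdealT {R : Type*} [CommRing R] {n : ℕ}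
    (I : Ideal (Matrix (Fin n) (Fin n) R)) : Prop :=
  ∀ (k : ℕ) (A : Fin k → Matrix (Fin n) (Fin n) R),
    (∃ X ∈ I, ∃ Y ∈ I, (∑ i, (A i)ᵀ * A i) = X + Yᵀ) → ∀ i, A i ∈ I

/-!
A matrix outside a real left ideal `I` is detected by a real point: a ring homomorphism `f` to a
formally real field and a vector `w` such that `f Z` kills `w` for all `Z ∈ I`, but `f A` does not.
At such a point the identity `∑ Aᵢᵀ Aᵢ = X + Yᵀ` gives `∑ (Aᵢ w) ⬝ (Aᵢ w) = w ⬝ X w + Y w ⬝ w = 0`,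
hence `Aᵢ w = 0` for all `i`.

To find the point, let `N` be the module of rows of matrices in `I` and `r` a row of `A` not in
`N`. The ideal `J = {c | c • r ∈ N}` has a formally real quotient, so the localization of `R ⧸ J`
at a minimal prime is a formally real field `K`. By reality of `N`, no nonzero multiple of the
image of `r` in `(R ⧸ J)ⁿ` lies in the image of `N`; hence `r` stays outside the `K`-span of `N`,
and some functional on `Kⁿ` vanishes on `N` but not at `r`.
-/

universe u

section FormallyReal

theorem exists_fin_sum_mul_self_of_isSumSq {A : Type*} [NonUnitalNonAssocSemiring A] {s : A}
    (hs : IsSumSq s) :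
    ∃ (k : ℕ) (a : Fin k → A), s = ∑ i, a i * a i := by
  induction hs with
  | zero => exact ⟨0, Fin.elim0, by simp⟩
  | sq_add b _ ih =>
    obtain ⟨k, a, rfl⟩ := ih
    exact ⟨k + 1, Fin.cons b a, by simp [Fin.sum_univ_succ]⟩

section Ring

variable {A : Type*} [Ring A]

theorem eq_zero_of_mul_self_add_eq_zero [IsFormallyReal A] {a s : A} (hs : IsSumSq s)
    (h : a * a + s = 0) : a = 0 :=
  (pow_eq_zero_iff two_ne_zero).mp <| (sq a).trans <|
    IsFormallyReal.eq_zero_of_add_right (.mul_self a) hs h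

theorem eq_zero_of_sum_mul_self_eq_zero [IsFormallyReal A] {ι : Type*} {t : Finset ι}
    {a : ι → A} (h : ∑ i ∈ t, a i * a i = 0) {i : ι} (hi : i ∈ t) : a i = 0 := by
  classical
  rw [← Finset.add_sum_erase t _ hi] at h
  exact eq_zero_of_mul_self_add_eq_zero (.sum_mul_self _ _) h

theorem eq_zero_of_sum_dotProduct_self_eq_zero [IsFormallyReal A] {ι n : Type*} [Fintype ι]
    [Fintype n] {v : ι → n → A} (h : ∑ i, v i ⬝ᵥ v i = 0) (i : ι) : v i = 0 := by
  simp only [dotProduct, ← Fintype.sum_prod_type'] at h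
  funext j
  exact eq_zero_of_sum_mul_self_eq_zero (a := fun q : ι × n => v q.1 q.2) h
    (Finset.mem_univ (i, j))

end Ring

theorem isFormallyReal_quotient {A : Type*} [CommRing A] {J : Ideal A}
    (hJ : ∀ (k : ℕ) (a : Fin k → A), ∑ i, a i * a i ∈ J → ∀ i, a i ∈ J) :
    IsFormallyReal (A ⧸ J) := by
  refine .of_eq_zero_of_eq_zero_of_mul_self_add fun {s a} hs h => ?_
  obtain ⟨k, b, rfl⟩ := exists_fin_sum_mul_self_of_isSumSq hs
  obtain ⟨a, rfl⟩ := Ideal.Quotient.mk_surjective a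
  choose c hc using fun i => Ideal.Quotient.mk_surjective (b i)
  refine Ideal.Quotient.eq_zero_iff_mem.mpr (hJ (k + 1) (Fin.cons a c) ?_ 0)
  simpa [← Ideal.Quotient.eq_zero_iff_mem, Fin.sum_univ_succ, hc] using h

theorem exists_isSumSq_algebraMap_eq_sq_mul {A B : Type*} [CommSemiring A] [CommSemiring B]
    [Algebra A B] (M : Submonoid A) [IsLocalization M B] {s : B} (hs : IsSumSq s) :
    ∃ c ∈ M, ∃ t : A, IsSumSq t ∧ algebraMap A B t = algebraMap A B c ^ 2 * s := by
  induction hs with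
  | zero => exact ⟨1, M.one_mem, 0, .zero, by simp⟩
  | @sq_add b s _ ih =>
    obtain ⟨c, hc, t, ht, hts⟩ := ih
    obtain ⟨⟨x, z⟩, hxz⟩ := IsLocalization.surj M b
    refine ⟨z * c, M.mul_mem z.2 hc, c * x * (c * x) + z * z * t,
      .sq_add _ (.mul (.mul_self _) ht), ?_⟩
    simp only [map_add, map_mul, hts, ← hxz]
    ring

theorem isFormallyReal_of_isLocalization {A B : Type*} [CommRing A] [CommRing B] [Algebra A B]
    (M : Submonoid A) [IsLocalization M B] [IsFormallyReal A] : IsFormallyReal B := by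
  refine .of_eq_zero_of_eq_zero_of_mul_self_add fun {s a} hs h => ?_
  obtain ⟨c, hc, t, ht, hts⟩ := exists_isSumSq_algebraMap_eq_sq_mul M hs
  obtain ⟨⟨x, z⟩, hxz⟩ := IsLocalization.surj M a
  have hnum : algebraMap A B (c * x * (c * x) + z * z * t) = 0 := by
    simp only [map_add, map_mul, hts, ← hxz]
    linear_combination algebraMap A B z ^ 2 * algebraMap A B c ^ 2 * h
  obtain ⟨d, hd⟩ := (IsLocalization.map_eq_zero_iff M B _).mp hnum
  have hx : d * c * x = 0 := eq_zero_of_mul_self_add_eq_zero (.mul (.mul_self (d * z : A)) ht)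
    (by linear_combination (d : A) * hd)
  have hunit : IsUnit (algebraMap A B (d * c * z)) :=
    IsLocalization.map_units B (d * ⟨c, hc⟩ * z)
  refine hunit.mul_left_cancel ?_
  rw [mul_zero, map_mul, mul_assoc, mul_comm _ a, hxz, ← map_mul, hx, map_zero]

theorem exists_formallyReal_field_isLocalization (A : Type u) [CommRing A] [Nontrivial A]
    [IsFormallyReal A] :
    ∃ (M : Submonoid A) (K : Type u) (_ : Field K) (_ : Algebra A K),
      0 ∉ M ∧ IsLocalization M K ∧ IsFormallyReal K := by
  obtain ⟨⟨q, hq⟩⟩ := Ideal.nonempty_minimalPrimes (bot_ne_top (α := Ideal A))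
  have := hq.1.1
  let K := Localization.AtPrime q
  have : IsFormallyReal K := isFormallyReal_of_isLocalization q.primeCompl
  have : Ring.KrullDimLE 0 K := .of_isLocalization q hq K
  let _ : Field K := Ring.KrullDimLE.isField_of_isReduced.toField
  exact ⟨q.primeCompl, K, inferInstance, inferInstance, fun h => h q.zero_mem,
    inferInstance, inferInstance⟩

end FormallyReal

theorem exists_dotProduct_eq_zero_of_forall_smul_notMem {A K n : Type*} [CommRing A] [Field K]
    [Algebra A K] [Fintype n] (M : Submonoid A) [IsLocalization M K] (N : Submodule A (n → A))
    {r : n → A} (hr : ∀ c ∈ M, c • r ∉ N) :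
    ∃ w : n → K, (∀ m ∈ N, (algebraMap A K ∘ m) ⬝ᵥ w = 0) ∧ (algebraMap A K ∘ r) ⬝ᵥ w ≠ 0 := by
  classical
  let coe : (n → A) →ₗ[A] (n → K) := .pi fun i => Algebra.linearMap A K ∘ₗ .proj i
  have hr' : coe r ∉ N.localized' K M coe := by
    rintro ⟨m, hm, s, hms⟩
    rw [IsLocalizedModule.mk'_eq_iff, Submonoid.smul_def, ← map_smul,
      IsLocalizedModule.eq_iff_exists M coe] at hms
    obtain ⟨c, hc⟩ := hms
    refine hr (c * s) (M.mul_mem c.2 s.2) ?_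
    rw [mul_smul]
    exact hc ▸ N.smul_mem _ hm
  obtain ⟨φ, hφr, hφN⟩ := Submodule.exists_le_ker_of_notMem hr'
  obtain ⟨w, rfl⟩ := (dotProductEquiv K n).surjective φ
  simp only [dotProductEquiv_apply_apply, dotProduct_comm w] at hφr
  refine ⟨w, fun m hm => ?_, hφr⟩
  have hm' : coe m ∈ N.localized' K M coe := ⟨m, hm, 1, IsLocalizedModule.mk'_one M coe m⟩
  rw [dotProduct_comm]
  exact hφN hm'

/-- The notion of a real left ideal transported to submodules of `n → R` along `rowSubmodule`:
the vectors `∑ i, u i j • u i` are the rows of the matrix `∑ i, (u i) (u i)ᵀ`. -/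
def IsRealSubmodule {R n : Type*} [CommRing R] (N : Submodule R (n → R)) : Prop :=
  ∀ (k : ℕ) (u : Fin k → n → R), (∀ j, ∑ i, u i j • u i ∈ N) → ∀ i, u i ∈ N

namespace IsRealSubmodule

variable {R : Type u} {n : Type*} [CommRing R] {N : Submodule R (n → R)}

theorem isFormallyReal_quotient_colon (hN : IsRealSubmodule N) (r : n → R) :
    IsFormallyReal (R ⧸ N.colon {r}) := by
  refine isFormallyReal_quotient fun k a ha i => ?_
  rw [Submodule.mem_colon_singleton] at ha ⊢
  refine hN k (fun i => a i • r) (fun j => ?_) i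
  convert N.smul_mem (r j) ha using 1
  simp only [Finset.sum_smul, Finset.smul_sum, smul_smul, Pi.smul_apply, smul_eq_mul]
  exact Finset.sum_congr rfl fun i _ => by ring_nf

theorem mem_colon_of_forall_smul_sub_mem (hN : IsRealSubmodule N) {r m : n → R} (hm : m ∈ N)
    {c : R} (h : ∀ j, (c • r - m) j ∈ N.colon {r}) : c ∈ N.colon {r} := by
  simp only [Submodule.mem_colon_singleton] at h ⊢
  have hmem : c • r - m ∈ N := by
    refine hN 1 (fun _ => c • r - m) (fun j => ?_) 0
    rw [Fin.sum_univ_one, smul_sub, smul_comm]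
    exact N.sub_mem (N.smul_mem c (h j)) (N.smul_mem _ hm)
  simpa using N.add_mem hmem hm

theorem exists_formallyReal_point [Fintype n] (hN : IsRealSubmodule N) {r : n → R} (hr : r ∉ N) :
    ∃ (K : Type u) (_ : Field K) (_ : IsFormallyReal K) (f : R →+* K) (w : n → K),
      (∀ m ∈ N, (f ∘ m) ⬝ᵥ w = 0) ∧ (f ∘ r) ⬝ᵥ w ≠ 0 := by
  let J : Ideal R := N.colon {r}
  let π : R →+* R ⧸ J := Ideal.Quotient.mk J
  have hJ : J ≠ ⊤ := by simpa [J, Ideal.ne_top_iff_one, Submodule.mem_colon_singleton] using hr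
  have : Nontrivial (R ⧸ J) := Ideal.Quotient.nontrivial_iff.mpr hJ
  have : IsFormallyReal (R ⧸ J) := hN.isFormallyReal_quotient_colon r
  let reduce : (n → R) →ₛₗ[π] (n → R ⧸ J) :=
    { toFun u := π ∘ u
      map_add' u v := funext fun j => map_add π (u j) (v j)
      map_smul' c u := funext fun j => map_mul π c (u j) }
  obtain ⟨M, K, _, _, hM, _, hK⟩ := exists_formallyReal_field_isLocalization (R ⧸ J)
  have hfree : ∀ c ∈ M, c • reduce r ∉ N.map reduce := by
    rintro c hc ⟨m, hm, hmc⟩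
    obtain ⟨c, rfl⟩ := Ideal.Quotient.mk_surjective c
    have hcJ : c ∈ J := hN.mem_colon_of_forall_smul_sub_mem hm fun j =>
      Ideal.Quotient.eq.mp (congrFun hmc j).symm
    exact hM (Ideal.Quotient.eq_zero_iff_mem.mpr hcJ ▸ hc)
  obtain ⟨w, hwN, hwr⟩ :=
    exists_dotProduct_eq_zero_of_forall_smul_notMem (K := K) M (N.map reduce) hfree
  exact ⟨K, inferInstance, hK, (algebraMap (R ⧸ J) K).comp π, w,
    fun m hm => hwN _ ⟨m, hm, rfl⟩, hwr⟩

end IsRealSubmodule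

section RowSubmodule

variable {R n : Type*} [CommRing R] [Fintype n] [DecidableEq n]

/-- The submodule of rows of the matrices in a left ideal `I`, which determines `I`. It is encoded
as the set of `u` such that the matrix all of whose rows are `u` lies in `I`. -/
def rowSubmodule (I : Ideal (Matrix n n R)) : Submodule R (n → R) :=
  (I.restrictScalars R).comap (vecMulVecBilin R R 1)

theorem mem_rowSubmodule {I : Ideal (Matrix n n R)} {u : n → R} :
    u ∈ rowSubmodule I ↔ vecMulVec 1 u ∈ I :=
  Iff.rfl

theorem mem_iff_forall_row_mem_rowSubmodule {I : Ideal (Matrix n n R)} {A : Matrix n n R} :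
    A ∈ I ↔ ∀ i, A.row i ∈ rowSubmodule I := by
  simp only [mem_rowSubmodule]
  refine ⟨fun hA i => ?_, fun hA => ?_⟩
  · have h := I.mul_mem_left (vecMulVec 1 (Pi.single i 1)) hA
    rwa [vecMulVec_mul, single_one_vecMul] at h
  · have hsum : A = ∑ i, Matrix.single i i 1 * vecMulVec 1 (A.row i) := by
      ext a b
      simp [Matrix.sum_apply, Matrix.mul_apply, Matrix.single_apply, ite_and]
    rw [hsum]
    exact I.sum_mem fun i _ => I.mul_mem_left _ (hA i)

end RowSubmodule

theorem sum_dotProduct_mulVec_self {R m n ι : Type*} [CommSemiring R] [Fintype m] [Fintype n]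
    (s : Finset ι) (A : ι → Matrix m n R) (w : n → R) :
    ∑ i ∈ s, (A i *ᵥ w) ⬝ᵥ (A i *ᵥ w) = w ⬝ᵥ ((∑ i ∈ s, (A i)ᵀ * A i) *ᵥ w) := by
  simp only [sum_mulVec, dotProduct_sum, ← mulVec_mulVec, dotProduct_mulVec, vecMul_transpose]

section RealLeftIdeal

variable {R : Type u} [CommRing R] {n : ℕ} {I : Ideal (Matrix (Fin n) (Fin n) R)}

theorem isRealSubmodule_rowSubmodule (hI : I.IsRealLeftIdealT) :
    IsRealSubmodule (rowSubmodule I) := by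
  intro k u hu
  refine hI k (fun i => vecMulVec 1 (u i)) (mem_iff_forall_row_mem_rowSubmodule.mpr fun j => ?_)
  have hrow : (∑ i, (vecMulVec 1 (u i))ᵀ * vecMulVec (1 : Fin n → R) (u i)).row j =
      n • ∑ i, u i j • u i := by
    ext b
    simp only [row_apply, Matrix.sum_apply, transpose_vecMulVec, vecMulVec_mul_vecMulVec,
      vecMulVec_apply, one_dotProduct_one, Fintype.card_fin, Pi.smul_apply, Finset.sum_apply,
      smul_eq_mul, nsmul_eq_mul, Finset.mul_sum, mul_left_comm]
  rw [hrow]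
  exact (rowSubmodule I).nsmul_mem (hu j) n

theorem exists_formallyReal_point_of_notMem (hI : I.IsRealLeftIdealT)
    {A : Matrix (Fin n) (Fin n) R} (hA : A ∉ I) :
    ∃ (K : Type u) (_ : Field K) (_ : IsFormallyReal K) (f : R →+* K) (w : Fin n → K),
      (∀ Z ∈ I, Z.map f *ᵥ w = 0) ∧ A.map f *ᵥ w ≠ 0 := by
  obtain ⟨i, hi⟩ := not_forall.mp (mem_iff_forall_row_mem_rowSubmodule.not.mp hA)
  obtain ⟨K, hK, hreal, f, w, hwI, hwA⟩ :=
    (isRealSubmodule_rowSubmodule hI).exists_formallyReal_point hi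
  exact ⟨K, hK, hreal, f, w,
    fun Z hZ => funext fun j => hwI _ (mem_iff_forall_row_mem_rowSubmodule.mp hZ j),
    fun h => hwA (congrFun h i)⟩

theorem isStronglyRealLeftIdealT_of_isRealLeftIdealT (hI : I.IsRealLeftIdealT) :
    I.IsStronglyRealLeftIdealT := by
  rintro k A ⟨X, hX, Y, hY, hXY⟩ i
  by_contra hA
  obtain ⟨K, _, _, f, w, hwI, hwA⟩ := exists_formallyReal_point_of_notMem hI hA
  have hmap : ∑ i, ((A i).map f)ᵀ * (A i).map f = X.map f + (Y.map f)ᵀ := by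
    simpa [Matrix.map_add, transpose_map] using congrArg f.mapMatrix hXY
  have hsum : ∑ i, ((A i).map f *ᵥ w) ⬝ᵥ ((A i).map f *ᵥ w) = 0 := by
    rw [sum_dotProduct_mulVec_self, hmap, add_mulVec, hwI X hX, zero_add, dotProduct_mulVec,
      vecMul_transpose, hwI Y hY, zero_dotProduct]
  exact hwA (eq_zero_of_sum_dotProduct_self_eq_zero hsum i)

theorem real_iff_stronglyReal_matrix_poly_general
    (I : Ideal (Matrix (Fin n) (Fin n) R)) :
    I.IsRealLeftIdealT ↔ I.IsStronglyRealLeftIdealT :=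
  ⟨isStronglyRealLeftIdealT_of_isRealLeftIdealT,
    fun h k A hA => h k A ⟨_, hA, 0, I.zero_mem, by simp⟩⟩

end RealLeftIdeal

/-- **Corollary 1 (real matrix polynomial case):** a left ideal of
`Mₙ(ℝ[x₁,…,x_d])` is real iff it is strongly real. -/
theorem real_iff_stronglyReal_matrix_poly (d n : ℕ)
    (I : Ideal (Matrix (Fin n) (Fin n) (MvPolynomial (Fin d) ℝ))) :
    I.IsRealLeftIdealT ↔ I.IsStronglyRealLeftIdealT :=
  real_iff_stronglyReal_matrix_poly_general I
end

section
/- (Theorem 1, commutative case) Let R be a commutative ring and N a submodule of R^n. The following are equivalent: (1) N is semiprime; (2) N equals the intersection of all prime submodules of R^n containing N; (3) N equals the intersection of all submodules of the form C_{p,u}, where p ranges over prime ideals of R and u over elements of R^n ∖ p^n, that contain N. (In (2) and (3) an empty intersection is taken to be all of R^n.) -/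
/-- A submodule `N` of `A^n` is *semiprime* if for every `f ∈ A^n` such that
`(f j * a) • f ∈ N` for every `a ∈ A` and every coordinate `j`, one has `f ∈ N`. -/
def Submodule.IsSemiprimeSubmodule {A : Type*} [Ring A] {n : ℕ}
    (N : Submodule A (Fin n → A)) : Prop :=
  ∀ f : Fin n → A, (∀ (j : Fin n) (a : A), (f j * a) • f ∈ N) → f ∈ N

/-- A submodule `N` of a module `M` is *prime* if for every scalar `a` and `m ∈ M` with
`(a * x) • m ∈ N` for all `x`, either `a • M ⊆ N` or `m ∈ N`. -/
def Submodule.IsPrimeSubmodule {A : Type*} [Ring A] {M : Type*} [AddCommGroup M] [Module A M]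
    (N : Submodule A M) : Prop :=
  ∀ (a : A) (m : M), (∀ x : A, (a * x) • m ∈ N) → (∀ m' : M, a • m' ∈ N) ∨ m ∈ N

/-- For an ideal `p` of a commutative ring `R` and `u ∈ R^n`, the submodule
`C_{p,u} = {m ∈ R^n | m 0 * u 0 + ⋯ + m (n-1) * u (n-1) ∈ p}`. -/
def Cpu {R : Type*} [CommRing R] {n : ℕ} (p : Ideal R) (u : Fin n → R) :
    Submodule R (Fin n → R) where
  carrier := {m | (∑ j, m j * u j) ∈ p}
  add_mem' := by
    intro a b ha hb
    simp only [Set.mem_setOf_eq, Pi.add_apply, add_mul, Finset.sum_add_distrib] at *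
    exact add_mem ha hb
  zero_mem' := by simp
  smul_mem' := by
    intro c m hm
    simp only [Set.mem_setOf_eq, Pi.smul_apply, smul_eq_mul, mul_assoc, ← Finset.mul_sum] at *
    exact Ideal.mul_mem_left _ _ hm

/-!
If `f ∉ N` with `N` semiprime, the ideal `(N : f)` is proper and radical; let `p` be a prime minimal
over it. After inverting the complement of `p`, the ideals `p` and `(N : f)` agree, so for `g ∈ p^n`
congruent modulo `N` to a multiple of `f` we get `g_j • f ∈ N`, thus `g_j • g ∈ N` for all `j`, and
`g ∈ N` by semiprimeness. Consequently no multiple `s • f` with `s ∉ p` lies in `N + p^n`: the image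
of `f` in `R^n / (N + p^n)` is not torsion over the domain `R / p`, so it is detected by a linear
functional into `R / p`. Such a functional is a dot product with some `u`, and then `C_{p,u}`
contains `N` but not `f`.
-/

namespace Cpu

variable {R : Type*} [CommRing R] {n : ℕ} {p : Ideal R} {u : Fin n → R}

theorem mem_iff {m : Fin n → R} : m ∈ Cpu p u ↔ m ⬝ᵥ u ∈ p :=
  Iff.rfl

theorem exists_notMem_of_notMem {f : Fin n → R} (hf : f ∉ Cpu p u) : ∃ j, u j ∉ p := by
  contrapose! hf
  exact p.sum_mem fun j _ => p.mul_mem_left _ (hf j)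

theorem isPrimeSubmodule (hp : p.IsPrime) : (Cpu p u).IsPrimeSubmodule := by
  simp only [Submodule.IsPrimeSubmodule, mem_iff, smul_dotProduct, smul_eq_mul]
  intro a m h
  have ham : a * (m ⬝ᵥ u) ∈ p := by simpa only [mul_one] using h 1
  exact (hp.mem_or_mem ham).imp_left fun ha m' => p.mul_mem_right _ ha

end Cpu

section Intersections

variable {A : Type*} [Ring A] {n : ℕ}

theorem isSemiprimeSubmodule_of_isPrimeSubmodule {P : Submodule A (Fin n → A)}
    (hP : P.IsPrimeSubmodule) : P.IsSemiprimeSubmodule := by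
  intro f hf
  by_contra hfP
  have coord_smul_mem (j : Fin n) (m : Fin n → A) : f j • m ∈ P :=
    (hP (f j) f (hf j)).resolve_right hfP m
  refine hfP ?_
  rw [pi_eq_sum_univ' f]
  exact sum_mem fun j _ => coord_smul_mem j _

theorem isSemiprimeSubmodule_sInf {S : Set (Submodule A (Fin n → A))}
    (hS : ∀ P ∈ S, P.IsSemiprimeSubmodule) : (sInf S).IsSemiprimeSubmodule := by
  intro f hf
  simp only [Submodule.mem_sInf] at hf ⊢
  exact fun P hP => hS P hP f fun j a => hf j a P hP

end Intersections

section MinimalPrimes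

variable {R : Type*} [CommRing R] {I p : Ideal R}

theorem exists_mul_mem_of_mem_minimalPrimes_of_isRadical (hI : I.IsRadical)
    (hp : p ∈ I.minimalPrimes) {x : R} (hx : x ∈ p) : ∃ t ∉ p, t * x ∈ I := by
  have : p.IsPrime := hp.1.1
  have hx_loc : algebraMap R (Localization.AtPrime p) x ∈
      (I.map (algebraMap R (Localization.AtPrime p))).radical := by
    rw [IsLocalization.AtPrime.radical_map_of_mem_minimalPrimes _ p I hp]
    exact Ideal.mem_map_of_mem _ hx
  obtain ⟨k, hk⟩ := hx_loc
  rw [← map_pow, IsLocalization.algebraMap_mem_map_algebraMap_iff p.primeCompl] at hk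
  obtain ⟨t, ht, htx⟩ := hk
  refine ⟨t, ht, hI ⟨k + 1, ?_⟩⟩
  have : (t * x) ^ (k + 1) = (t ^ k * x) * (t * x ^ k) := by ring
  exact this ▸ I.mul_mem_left _ htx

theorem exists_forall_mul_mem_of_mem_minimalPrimes_of_isRadical {ι : Type*} [Finite ι]
    (hI : I.IsRadical) (hp : p ∈ I.minimalPrimes) {g : ι → R} (hg : ∀ i, g i ∈ p) :
    ∃ t ∉ p, ∀ i, t * g i ∈ I := by
  have := Fintype.ofFinite ι
  choose t ht htg using fun i =>
    exists_mul_mem_of_mem_minimalPrimes_of_isRadical hI hp (hg i)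
  refine ⟨∏ i, t i, fun h => ?_, fun i => ?_⟩
  · obtain ⟨i, -, hi⟩ := hp.1.1.prod_mem_iff.1 h
    exact ht i hi
  · exact I.mem_of_dvd (mul_dvd_mul_right (Finset.dvd_prod_of_mem t (Finset.mem_univ i)) _) (htg i)

end MinimalPrimes

section Functionals

theorem exists_dual_apply_ne_zero_of_notMem_torsion {A M : Type*} [CommRing A] [IsDomain A]
    [AddCommGroup M] [Module A M] [Module.Finite A M] {x : M} (hx : x ∉ Submodule.torsion A M) :
    ∃ l : Module.Dual A M, l x ≠ 0 := by
  let K := FractionRing A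
  let toLoc := LocalizedModule.mkLinearMap (nonZeroDivisors A) M
  have hx_loc : toLoc x ≠ 0 := by
    rwa [Ne, IsLocalizedModule.eq_zero_iff (nonZeroDivisors A) toLoc]
  obtain ⟨φ, hφ⟩ := Module.Projective.exists_dual_ne_zero K hx_loc
  let ψ : M →ₗ[A] K := φ.restrictScalars A ∘ₗ toLoc
  have range_fg : ψ.range.FG := Module.Finite.iff_fg.1 inferInstance
  obtain ⟨a, ha, hψ⟩ := FractionalIdeal.isFractional_of_fg (S := nonZeroDivisors A) range_fg
  have integral (y : M) : (a • ψ) y ∈ (Algebra.linearMap A K).range := hψ (ψ y) ⟨y, rfl⟩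
  let l := (a • ψ).codRestrictOfInjective (Algebra.linearMap A K)
    (IsFractionRing.injective A K) integral
  have algebraMap_l : Algebra.linearMap A K (l x) = a • ψ x :=
    LinearMap.codRestrictOfInjective_comp_apply _ _ _ _ x
  refine ⟨l, fun hl => ?_⟩
  rw [hl, map_zero] at algebraMap_l
  exact smul_ne_zero (nonZeroDivisors.ne_zero ha) hφ algebraMap_l.symm

variable {R M : Type*} [CommRing R] [AddCommGroup M] [Module R M] [Module.Finite R M]
  {p : Ideal R}

theorem exists_linearMap_quotient_apply_ne_zero [p.IsPrime] {x : M}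
    (hx : (p • (⊤ : Submodule R M)).colon {x} ≤ p) : ∃ l : M →ₗ[R] R ⧸ p, l x ≠ 0 := by
  let Q := M ⧸ p • (⊤ : Submodule R M)
  let π : M →ₗ[R] Q := (p • (⊤ : Submodule R M)).mkQ
  have : Module.Finite (R ⧸ p) Q := Module.Finite.of_restrictScalars_finite R _ _
  have not_torsion : π x ∉ Submodule.torsion (R ⧸ p) Q := by
    rintro ⟨⟨a, ha⟩, hax⟩
    obtain ⟨s, rfl⟩ := Ideal.Quotient.mk_surjective a
    have hs : s ∈ (p • (⊤ : Submodule R M)).colon {x} := by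
      rw [Submodule.mem_colon_singleton, ← Submodule.Quotient.mk_eq_zero]
      exact hax
    exact nonZeroDivisors.ne_zero ha (Ideal.Quotient.eq_zero_iff_mem.2 (hx hs))
  obtain ⟨l, hl⟩ := exists_dual_apply_ne_zero_of_notMem_torsion not_torsion
  exact ⟨l.restrictScalars R ∘ₗ π, hl⟩

theorem exists_dual_apply_notMem_of_colon_sup_le [Module.Projective R M] [p.IsPrime]
    {N : Submodule R M} {f : M} (hf : (N ⊔ p • ⊤).colon {f} ≤ p) :
    ∃ l : Module.Dual R M, (∀ m ∈ N, l m ∈ p) ∧ l f ∉ p := by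
  have colon_le : (p • (⊤ : Submodule R (M ⧸ N))).colon {N.mkQ f} ≤ p := by
    intro s hs
    refine hf ?_
    rw [Submodule.mem_colon_singleton] at hs ⊢
    rwa [← Submodule.comap_map_mkQ, Submodule.mem_comap, Submodule.map_smul'', Submodule.map_top,
      Submodule.range_mkQ, map_smul]
  obtain ⟨q, hq⟩ := exists_linearMap_quotient_apply_ne_zero colon_le
  obtain ⟨l, hl⟩ := Module.projective_lifting_property p.mkQ (q ∘ₗ N.mkQ) p.mkQ_surjective
  have mem_iff (m : M) : l m ∈ p ↔ q (N.mkQ m) = 0 := by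
    rw [← Submodule.Quotient.mk_eq_zero]
    exact Eq.congr_left (LinearMap.congr_fun hl m)
  refine ⟨l, fun m hm => ?_, (mem_iff f).not.2 hq⟩
  rw [mem_iff, N.mkQ_apply, (Submodule.Quotient.mk_eq_zero N).2 hm, map_zero]

end Functionals

section Semiprime

variable {R : Type*} [CommRing R] {n : ℕ} {N : Submodule R (Fin n → R)}

theorem isRadical_colon_singleton_of_isSemiprimeSubmodule (hN : N.IsSemiprimeSubmodule)
    (f : Fin n → R) : (N.colon {f}).IsRadical := by
  refine (Ideal.isRadical_iff_pow_one_lt 2 one_lt_two).2 fun a ha => ?_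
  rw [Submodule.mem_colon_singleton] at ha ⊢
  refine hN _ fun j b => ?_
  have : ((a • f) j * b) • a • f = (f j * b) • a ^ 2 • f := by
    simp only [smul_smul, Pi.smul_apply, smul_eq_mul]
    ring_nf
  exact this ▸ N.smul_mem _ ha

theorem colon_sup_smul_top_le_of_isSemiprimeSubmodule (hN : N.IsSemiprimeSubmodule)
    {f : Fin n → R} {p : Ideal R} (hp : p ∈ (N.colon {f}).minimalPrimes) :
    (N ⊔ p • ⊤).colon {f} ≤ p := by
  intro s hs
  obtain ⟨ν, hν, g, hg, hsf⟩ := Submodule.mem_sup.1 (Submodule.mem_colon_singleton.1 hs)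
  have coord_mem (i : Fin n) : g i ∈ p := by
    simpa only [smul_eq_mul, Ideal.mul_top, Submodule.mem_comap, LinearMap.proj_apply] using
      p.smul_top_le_comap_smul_top (LinearMap.proj i) hg
  obtain ⟨t, ht, htg⟩ := exists_forall_mul_mem_of_mem_minimalPrimes_of_isRadical
    (isRadical_colon_singleton_of_isSemiprimeSubmodule hN f) hp coord_mem
  have coord_smul_mem (j : Fin n) : (t * g j) • g ∈ N := by
    have hg_eq : (t * g j) • g = s • (t * g j) • f - (t * g j) • ν := by
      rw [smul_comm s, ← hsf, ← smul_sub, add_sub_cancel_left]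
    rw [hg_eq]
    exact N.sub_mem (N.smul_mem _ (Submodule.mem_colon_singleton.1 (htg j))) (N.smul_mem _ hν)
  have smul_mem : t • g ∈ N := hN _ fun j b => by
    have : ((t • g) j * b) • t • g = (b * t) • (t * g j) • g := by
      simp only [smul_smul, Pi.smul_apply, smul_eq_mul]
      ring_nf
    exact this ▸ N.smul_mem _ (coord_smul_mem j)
  have hts : t * s ∈ N.colon {f} := by
    rw [Submodule.mem_colon_singleton, mul_smul, ← hsf, smul_add]
    exact N.add_mem (N.smul_mem _ hν) smul_mem
  exact (hp.1.1.mem_or_mem (hp.1.2 hts)).resolve_left ht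

theorem exists_le_cpu_notMem (hN : N.IsSemiprimeSubmodule) {f : Fin n → R} (hf : f ∉ N) :
    ∃ (p : Ideal R) (u : Fin n → R), p.IsPrime ∧ N ≤ Cpu p u ∧ f ∉ Cpu p u := by
  have colon_ne_top : N.colon {f} ≠ ⊤ := by
    rwa [Ne, Ideal.eq_top_iff_one, Submodule.mem_colon_singleton, one_smul]
  obtain ⟨p, hp⟩ := Ideal.nonempty_minimalPrimes colon_ne_top
  have p_isPrime : p.IsPrime := hp.1.1
  obtain ⟨l, hlN, hlf⟩ := exists_dual_apply_notMem_of_colon_sup_le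
    (colon_sup_smul_top_le_of_isSemiprimeSubmodule hN hp)
  let u := (dotProductEquiv R (Fin n)).symm l
  have dotProduct_u (m : Fin n → R) : m ⬝ᵥ u = l m := by
    rw [dotProduct_comm]
    exact LinearMap.congr_fun ((dotProductEquiv R (Fin n)).apply_symm_apply l) m
  refine ⟨p, u, p_isPrime, fun m hm => ?_, ?_⟩
  · simpa only [Cpu.mem_iff, dotProduct_u] using hlN m hm
  · simpa only [Cpu.mem_iff, dotProduct_u] using hlf

theorem eq_sInf_cpu (hN : N.IsSemiprimeSubmodule) :
    N = sInf {P : Submodule R (Fin n → R) |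
      (∃ (p : Ideal R) (u : Fin n → R), p.IsPrime ∧ (∃ j, u j ∉ p) ∧ P = Cpu p u) ∧ N ≤ P} := by
  refine le_antisymm (le_sInf fun P hP => hP.2) fun f hf => ?_
  by_contra hfN
  obtain ⟨p, u, hp, hle, hfu⟩ := exists_le_cpu_notMem hN hfN
  exact hfu (Submodule.mem_sInf.1 hf _
    ⟨⟨p, u, hp, Cpu.exists_notMem_of_notMem hfu, rfl⟩, hle⟩)

end Semiprime

/-- **Theorem 1 (commutative case).** For a submodule `N` of `R^n` over a commutative ring,
the following are equivalent: (1) `N` is semiprime; (2) `N` is the intersection of all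
prime submodules containing it; (3) `N` is the intersection of all submodules of the form
`C_{p,u}` (with `p` prime and `u ∉ p^n`) containing it. -/
theorem semiprime_tfae {R : Type*} [CommRing R] {n : ℕ} (N : Submodule R (Fin n → R)) :
    (N.IsSemiprimeSubmodule ↔
        N = sInf {P : Submodule R (Fin n → R) | P.IsPrimeSubmodule ∧ N ≤ P}) ∧
      (N.IsSemiprimeSubmodule ↔
        N = sInf {P : Submodule R (Fin n → R) |
          (∃ (p : Ideal R) (u : Fin n → R), p.IsPrime ∧ (∃ j, u j ∉ p) ∧ P = Cpu p u) ∧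
            N ≤ P}) := by
  refine ⟨⟨fun hN => ?_, fun h => ?_⟩, ⟨eq_sInf_cpu, fun h => ?_⟩⟩
  · refine le_antisymm (le_sInf fun P hP => hP.2) ((sInf_le_sInf ?_).trans_eq
      (eq_sInf_cpu hN).symm)
    rintro _ ⟨⟨p, u, hp, -, rfl⟩, hle⟩
    exact ⟨Cpu.isPrimeSubmodule hp, hle⟩
  · rw [h]
    exact isSemiprimeSubmodule_sInf fun P hP => isSemiprimeSubmodule_of_isPrimeSubmodule hP.1
  · rw [h]
    refine isSemiprimeSubmodule_sInf ?_
    rintro _ ⟨⟨p, u, hp, -, rfl⟩, -⟩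
    exact isSemiprimeSubmodule_of_isPrimeSubmodule (Cpu.isPrimeSubmodule hp)
end

section
/- (Theorem 2, general implication (1) ⇒ (2)) Let A be a ring with involution * and let N be a real submodule of the left A-module A^n. Then N is semiprime, and the two-sided ideal (N : A^n) = {a ∈ A | a·A^n ⊆ N} is real, i.e., whenever a₁*a₁ + ⋯ + a_k*a_k ∈ (N : A^n) for a₁, …, a_k ∈ A, then a₁, …, a_k ∈ (N : A^n). -/
/-- A submodule `N` of `A^n`, for a ring `A` with involution `star`, is *real* if whenever
`f 0, …, f (m-1) ∈ A^n` satisfy `∑ i, star (f i j) • f i ∈ N` for every coordinate `j`,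
each `f i` lies in `N`. -/
def Submodule.IsRealSubmoduleStar {A : Type*} [Ring A] [StarRing A] {n : ℕ}
    (N : Submodule A (Fin n → A)) : Prop :=
  ∀ (m : ℕ) (f : Fin m → (Fin n → A)),
    (∀ j, (∑ i, star (f i j) • f i) ∈ N) → ∀ i, f i ∈ N

/-! For a fixed `m ∈ A^n`, the vectors `a i • m` satisfy
`∑ i, star ((a i • m) j) • a i • m = star (m j) • (∑ i, star (a i) * a i) • m`, so a real submodule
containing `(∑ i, star (a i) * a i) • m` contains every `a i • m`. For the single scalar
`star (f j)` and `m = f` this says that `(f j * star (f j)) • f ∈ N` forces `star (f j) • f ∈ N`;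
if this holds for all `j`, then `f ∈ N` by reality again. -/

theorem sum_star_mul_smul_smul {ι A M : Type*} [Semiring A] [StarMul A] [AddCommMonoid M]
    [Module A M] (s : Finset ι) (a : ι → A) (b : A) (x : M) :
    ∑ i ∈ s, star (a i * b) • a i • x = star b • (∑ i ∈ s, star (a i) * a i) • x := by
  simp only [star_mul, mul_smul, Finset.sum_smul, Finset.smul_sum]

namespace Submodule.IsRealSubmoduleStar

variable {ι A : Type*} [Fintype ι] [Ring A] [StarRing A] {n : ℕ} {N : Submodule A (Fin n → A)}

theorem mem_of_sum_star_smul_mem (hN : N.IsRealSubmoduleStar) {f : ι → Fin n → A}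
    (hf : ∀ j, ∑ i, star (f i j) • f i ∈ N) (i : ι) : f i ∈ N := by
  let e := Fintype.equivFin ι
  have hsum (j : Fin n) : ∑ k, star (f (e.symm k) j) • f (e.symm k) ∈ N := by
    rw [e.symm.sum_comp fun i ↦ star (f i j) • f i]
    exact hf j
  simpa using hN _ (f ∘ e.symm) hsum (e i)

theorem smul_mem_of_sum_star_mul_self_smul_mem (hN : N.IsRealSubmoduleStar) {a : ι → A}
    {m : Fin n → A} (h : (∑ i, star (a i) * a i) • m ∈ N) (i : ι) : a i • m ∈ N := by
  refine hN.mem_of_sum_star_smul_mem (f := fun i ↦ a i • m) (fun j ↦ ?_) i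
  simp only [Pi.smul_apply, smul_eq_mul, sum_star_mul_smul_smul]
  exact N.smul_mem _ h

theorem mem_of_star_smul_mem (hN : N.IsRealSubmoduleStar) {f : Fin n → A}
    (hf : ∀ j, star (f j) • f ∈ N) : f ∈ N :=
  hN.mem_of_sum_star_smul_mem (f := fun _ : Unit ↦ f) (by simpa using hf) ()

theorem smul_mem_of_star_mul_self_smul_mem (hN : N.IsRealSubmoduleStar) {a : A} {m : Fin n → A}
    (h : (star a * a) • m ∈ N) : a • m ∈ N :=
  hN.smul_mem_of_sum_star_mul_self_smul_mem (a := fun _ : Unit ↦ a) (by simpa using h) ()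

theorem mem_of_mul_star_smul_mem (hN : N.IsRealSubmoduleStar) {f : Fin n → A}
    (hf : ∀ j, (f j * star (f j)) • f ∈ N) : f ∈ N :=
  hN.mem_of_star_smul_mem fun j ↦
    hN.smul_mem_of_star_mul_self_smul_mem (by simpa only [star_star] using hf j)

theorem isSemiprimeSubmodule (hN : N.IsRealSubmoduleStar) : N.IsSemiprimeSubmodule :=
  fun f hf ↦ hN.mem_of_mul_star_smul_mem fun j ↦ hf j (star (f j))

end Submodule.IsRealSubmoduleStar

/-- **Theorem 2, implication (1) ⇒ (2), for a general ring with involution.**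
If `N` is a real submodule of `A^n` then `N` is semiprime and the two-sided ideal
`(N : A^n) = {a | a • A^n ⊆ N}` is real:  whenever
`star (a 0) * a 0 + ⋯ + star (a (k-1)) * a (k-1) ∈ (N : A^n)`, each `a i ∈ (N : A^n)`. -/
theorem real_submodule_semiprime_and_colon_real {A : Type*} [Ring A] [StarRing A] {n : ℕ}
    (N : Submodule A (Fin n → A)) (hN : N.IsRealSubmoduleStar) :
    N.IsSemiprimeSubmodule ∧
      (∀ (k : ℕ) (a : Fin k → A),
        (∀ m : Fin n → A, (∑ i, star (a i) * a i) • m ∈ N) →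
          ∀ i, ∀ m : Fin n → A, a i • m ∈ N) :=
  ⟨hN.isSemiprimeSubmodule, fun _ _ ha i m ↦ hN.smul_mem_of_sum_star_mul_self_smul_mem (ha m) i⟩
end

section
/- (Proposition 1, claim (3)) Let R be a commutative ring, p a prime ideal of R with p ≠ R, and N a submodule of R^n such that (N : R^n) ⊆ p. Then the set K := {m ∈ R^n | there exists c ∈ R ∖ p with c·m ∈ N + p·R^n} is a p-prime submodule of R^n containing N, and K is contained in every p-prime submodule of R^n that contains N (i.e., K is the smallest p-prime submodule containing N). -/
/-- A submodule `K` of `R^n` is `p`-*prime* if it is prime and `(K : R^n) = p`. -/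
def Submodule.IsPPrime {R : Type*} [CommRing R] {n : ℕ}
    (K : Submodule R (Fin n → R)) (p : Ideal R) : Prop :=
  K.IsPrimeSubmodule ∧ ∀ a : R, (∀ m : Fin n → R, a • m ∈ K) ↔ a ∈ p

/-!
Write `K` for the set of all `m` with `c • m ∈ N + p • M` for some `c ∉ p`. For any module `M` it
is a submodule with `p ⊆ (K : M)`, from which multiplication by elements outside `p` can be
cancelled; hence it is prime, and it lies in every `p`-prime submodule containing `N`. So
`(K : M) = p` as soon as `K ≠ M`, that is, as soon as `p` is in the support of `M ⧸ (N + p • M)`.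
For finitely generated `M` that support is `Supp (M ⧸ N) ∩ V(p)` by Nakayama's lemma, and it
contains `p` exactly when `(N : M) ⊆ p`.
-/

section Quotient

variable {R M : Type*} [CommRing R] [AddCommGroup M] [Module R M]

theorem support_quotient_sup_smul_top [Module.Finite R M] (N : Submodule R M) (I : Ideal R) :
    Module.support R (M ⧸ N ⊔ I • ⊤) =
      Module.support R (M ⧸ N) ∩ PrimeSpectrum.zeroLocus (I : Set R) := by
  have hmap : (I • ⊤ : Submodule R M).map N.mkQ = I • ⊤ := by
    rw [Submodule.map_smul'', Submodule.map_top, Submodule.range_mkQ]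
  rw [← Module.support_quotient, ← hmap,
    (Submodule.quotientQuotientEquivQuotientSup N (I • ⊤)).support_eq]

theorem mem_support_quotient_iff_colon_le [Module.Finite R M] {N : Submodule R M}
    {p : PrimeSpectrum R} :
    p ∈ Module.support R (M ⧸ N) ↔ N.colon Set.univ ≤ p.asIdeal := by
  rw [Module.mem_support_iff_of_finite, Submodule.annihilator_quotient]

end Quotient

section Pi

variable {R ι : Type*} [Semiring R] [Finite ι]

theorem smul_pi_univ {P : ι → Type*} [∀ i, AddCommMonoid (P i)] [∀ i, Module R (P i)]
    (I : Ideal R) (N : ∀ i, Submodule R (P i)) :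
    I • Submodule.pi Set.univ N = Submodule.pi Set.univ fun i => I • N i := by
  classical
  simp only [← Submodule.iSup_map_single, Submodule.smul_iSup, Submodule.map_smul'']

theorem smul_top_pi_eq_pi (I : Ideal R) [I.IsTwoSided] :
    (I • ⊤ : Submodule R (ι → R)) = Submodule.pi Set.univ fun _ => I := by
  rw [← Submodule.pi_top Set.univ, smul_pi_univ]
  simp only [smul_eq_mul, Ideal.mul_top]

end Pi

section PrimeSubmodule

variable {R M : Type*} [CommRing R] [AddCommGroup M] [Module R M]

theorem isPrimeSubmodule_iff {N : Submodule R M} :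
    N.IsPrimeSubmodule ↔ ∀ (a : R) (m : M), a • m ∈ N → (∀ m' : M, a • m' ∈ N) ∨ m ∈ N := by
  refine forall₂_congr fun a m => imp_congr_left ⟨fun h => mul_one a ▸ h 1, fun h x => ?_⟩
  rw [mul_comm, mul_smul]
  exact N.smul_mem x h

/-- The notion of `p`-prime submodule, `Submodule.IsPPrime`, for submodules of an arbitrary
module; the two agree definitionally on `Fin n → R`. -/
def IsPrimeOver (p : Ideal R) (N : Submodule R M) : Prop :=
  N.IsPrimeSubmodule ∧ ∀ a : R, (∀ m : M, a • m ∈ N) ↔ a ∈ p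

theorem IsPrimeOver.smul_top_le {p : Ideal R} {N : Submodule R M} (hN : IsPrimeOver p N) :
    p • ⊤ ≤ N :=
  Submodule.smul_le.2 fun a ha m _ => (hN.2 a).2 ha m

theorem IsPrimeOver.mem_of_smul_mem {p : Ideal R} {N : Submodule R M} (hN : IsPrimeOver p N)
    {a : R} {m : M} (ha : a ∉ p) (h : a • m ∈ N) : m ∈ N :=
  (isPrimeSubmodule_iff.1 hN.1 a m h).resolve_left fun ha' => ha ((hN.2 a).1 ha')

end PrimeSubmodule

section PrimeClosure

variable {R M : Type*} [CommRing R] [AddCommGroup M] [Module R M]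

/-- The saturation of `N + p • M` with respect to the complement of `p`, that is, the set `K` of
all `m` with `c • m ∈ N + p • M` for some `c ∉ p`. It is encoded as the preimage of the
`p.primeCompl`-torsion of `M ⧸ (N + p • M)`, so that it is a submodule by construction. -/
def primeClosure (p : Ideal R) [p.IsPrime] (N : Submodule R M) : Submodule R M :=
  (Submodule.torsion' R (M ⧸ N ⊔ p • ⊤) p.primeCompl).comap (N ⊔ p • ⊤).mkQ

variable {p : Ideal R} [p.IsPrime] {N Q : Submodule R M} {a : R} {m : M}

theorem mem_primeClosure : m ∈ primeClosure p N ↔ ∃ c ∉ p, c • m ∈ N ⊔ p • ⊤ := by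
  simp only [primeClosure, Submodule.mem_comap, Submodule.mem_torsion'_iff, Subtype.exists,
    Submonoid.mk_smul, Submodule.mkQ_apply, ← Submodule.Quotient.mk_smul,
    Submodule.Quotient.mk_eq_zero, Ideal.mem_primeCompl_iff, exists_prop]

theorem sup_smul_top_le_primeClosure : N ⊔ p • ⊤ ≤ primeClosure p N := fun m hm =>
  mem_primeClosure.2 ⟨1, p.one_notMem, (one_smul R m).symm ▸ hm⟩

theorem smul_mem_primeClosure (ha : a ∈ p) (m : M) : a • m ∈ primeClosure p N :=
  sup_smul_top_le_primeClosure <|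
    Submodule.mem_sup_right <| Submodule.smul_mem_smul ha Submodule.mem_top

theorem mem_primeClosure_of_smul_mem (ha : a ∉ p) (h : a • m ∈ primeClosure p N) :
    m ∈ primeClosure p N := by
  obtain ⟨c, hc, hcam⟩ := mem_primeClosure.1 h
  exact mem_primeClosure.2 ⟨c * a, p.primeCompl.mul_mem hc ha, by rwa [mul_smul]⟩

theorem isPrimeSubmodule_primeClosure : (primeClosure p N).IsPrimeSubmodule :=
  isPrimeSubmodule_iff.2 fun a _ h => (em (a ∈ p)).imp smul_mem_primeClosure
    fun ha => mem_primeClosure_of_smul_mem ha h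

theorem primeClosure_le (hQ : IsPrimeOver p Q) (hNQ : N ≤ Q) : primeClosure p N ≤ Q := by
  intro m hm
  obtain ⟨c, hc, hcm⟩ := mem_primeClosure.1 hm
  exact hQ.mem_of_smul_mem hc (sup_le hNQ hQ.smul_top_le hcm)

theorem primeClosure_ne_top [Module.Finite R M] (hN : N.colon Set.univ ≤ p) :
    primeClosure p N ≠ ⊤ := by
  let x : PrimeSpectrum R := ⟨p, inferInstance⟩
  have hx : x ∈ Module.support R (M ⧸ N ⊔ p • ⊤) := by
    rw [support_quotient_sup_smul_top]
    exact ⟨mem_support_quotient_iff_colon_le.2 hN, (PrimeSpectrum.mem_zeroLocus _ _).2 subset_rfl⟩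
  obtain ⟨y, hy⟩ := Module.mem_support_iff'.1 hx
  obtain ⟨m, rfl⟩ := Submodule.mkQ_surjective _ y
  intro htop
  obtain ⟨c, hc, hcm⟩ := mem_primeClosure.1 (htop ▸ Submodule.mem_top : m ∈ primeClosure p N)
  exact hy c hc ((Submodule.Quotient.mk_eq_zero _).2 hcm)

theorem isPrimeOver_primeClosure [Module.Finite R M] (hN : N.colon Set.univ ≤ p) :
    IsPrimeOver p (primeClosure p N) := by
  refine ⟨isPrimeSubmodule_primeClosure, fun a => ⟨fun h => ?_, smul_mem_primeClosure⟩⟩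
  by_contra ha
  exact primeClosure_ne_top hN <| eq_top_iff.2 fun m _ => mem_primeClosure_of_smul_mem ha (h m)

theorem smallest_pPrime_submodule_general [Module.Finite R M] (hN : N.colon Set.univ ≤ p) :
    IsLeast {K | IsPrimeOver p K ∧ N ≤ K} (primeClosure p N) :=
  ⟨⟨isPrimeOver_primeClosure hN, le_sup_left.trans sup_smul_top_le_primeClosure⟩,
    fun _ hK => primeClosure_le hK.1 hK.2⟩

end PrimeClosure

/-- **Proposition 1, claim (3).** Let `p ≠ R` be a prime ideal of the commutative ring `R`
and `N ≤ R^n` a submodule with `(N : R^n) ⊆ p`.  Then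
`K = {m | ∃ c ∉ p, c • m ∈ N + p·R^n}` is the smallest `p`-prime submodule containing `N`. -/
theorem smallest_pPrime_submodule {R : Type*} [CommRing R] {n : ℕ}
    (p : Ideal R) (hp : p.IsPrime)
    (N : Submodule R (Fin n → R))
    (hNp : ∀ a : R, (∀ m : Fin n → R, a • m ∈ N) → a ∈ p) :
    ∃ K : Submodule R (Fin n → R),
      (K : Set (Fin n → R)) =
          {m | ∃ c : R, c ∉ p ∧ c • m ∈ N ⊔ Submodule.pi Set.univ (fun _ : Fin n => p)} ∧
        K.IsPPrime p ∧ N ≤ K ∧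
        ∀ Q : Submodule R (Fin n → R), Q.IsPPrime p → N ≤ Q → K ≤ Q := by
  have hN : N.colon Set.univ ≤ p := fun a ha => hNp a fun m => Submodule.mem_colon.1 ha m trivial
  obtain ⟨⟨hK, hNK⟩, hmin⟩ := smallest_pPrime_submodule_general hN
  rw [← smul_top_pi_eq_pi]
  exact ⟨primeClosure p N, Set.ext fun _ => mem_primeClosure, hK, hNK,
    fun Q hQ hNQ => hmin ⟨hQ, hNQ⟩⟩
end

section
/- (Proposition 2) Let A be a ring with involution * and let N be a submodule of the left A-module A^n. Let I be the left ideal of M_n(A) corresponding to N, i.e., I = {F ∈ M_n(A) | every row of F lies in N}, where M_n(A) carries the conjugate-transpose involution [a_{ij}]* = [a_{ji}*]. Then N is a real submodule of A^n if and only if I is a real left ideal of M_n(A). -/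
open Matrix

/-- A left ideal `I` of the matrix ring `Mₙ(A)`, with the conjugate-transpose involution
`ᴴ`, is *real* if whenever `(M 0)ᴴ * M 0 + ⋯ + (M (k-1))ᴴ * M (k-1) ∈ I`, each `M i ∈ I`.
(In Mathlib, `Ideal` means left ideal.) -/
def Ideal.IsRealLeftIdealH {A : Type*} [Ring A] [StarRing A] {n : ℕ}
    (I : Ideal (Matrix (Fin n) (Fin n) A)) : Prop :=
  ∀ (k : ℕ) (M : Fin k → Matrix (Fin n) (Fin n) A),
    (∑ i, (M i)ᴴ * M i) ∈ I → ∀ i, M i ∈ I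

/-!
The `j`-th row of `∑ i, (M i)ᴴ * M i` is `∑ i, ∑ l, star (M i l j) • (M i).row l`, the `j`-th sum in
the definition of a real submodule for the family of all rows of all the `M i`. So a family of
matrices is tested through its rows, and a family of vectors by placing each of them as the only
nonzero row of a square matrix.
-/

section

variable {A ι m n : Type*} [NonUnitalNonAssocSemiring A]

/-- A subset `I` of a ring with involution (typically a left ideal) is *real* if it contains
`a₁, …, aₖ` as soon as it contains `a₁* a₁ + ⋯ + aₖ* aₖ`. -/
def IsRealSet [Star A] (I : Set A) : Prop :=
  ∀ (k : ℕ) (a : Fin k → A), ∑ i, star (a i) * a i ∈ I → ∀ i, a i ∈ I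

/-- The condition defining real submodules of `A^n`, for an arbitrary set of vectors with entries
indexed by an arbitrary type. -/
def IsRealVectorSet [Star A] (N : Set (n → A)) : Prop :=
  ∀ (k : ℕ) (f : Fin k → n → A), (∀ j, ∑ i, star (f i j) • f i ∈ N) → ∀ i, f i ∈ N

theorem IsRealVectorSet.mem_of_fintype [Star A] [Fintype ι] {N : Set (n → A)}
    (hN : IsRealVectorSet N) {f : ι → n → A} (hf : ∀ j, ∑ i, star (f i j) • f i ∈ N) (i : ι) :
    f i ∈ N := by
  let e := Fintype.equivFin ι
  have hfe (j : n) : ∑ p, star (f (e.symm p) j) • f (e.symm p) ∈ N := by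
    rw [e.symm.sum_comp fun i => star (f i j) • f i]
    exact hf j
  have hmem : f (e.symm (e i)) ∈ N := hN _ (fun p => f (e.symm p)) hfe (e i)
  rwa [e.symm_apply_apply] at hmem

theorem row_sum_conjTranspose_mul_self [Star A] [Fintype ι] [Fintype m]
    (M : ι → Matrix m n A) (j : n) :
    (∑ i, (M i)ᴴ * M i).row j = ∑ i, ∑ l, star (M i l j) • (M i).row l := by
  ext c
  simp only [row_apply, Matrix.sum_apply, mul_apply, conjTranspose_apply, Finset.sum_apply,
    Pi.smul_apply, smul_eq_mul]

theorem sum_star_smul_row_updateRow_zero [StarAddMonoid A] [Fintype m] [DecidableEq m]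
    (r : m) (v : n → A) (j : n) :
    ∑ l, star (updateRow 0 r v l j) • (updateRow 0 r v).row l = star (v j) • v := by
  rw [Fintype.sum_eq_single r]
  · rw [row_apply', updateRow_self]
  · intro l hl
    ext
    simp [updateRow_ne hl]

theorem IsRealVectorSet.isRealSet_matrix [Star A] [Fintype n] {N : Set (n → A)}
    (hN : IsRealVectorSet N) : IsRealSet {F : Matrix n n A | ∀ i, F.row i ∈ N} := by
  intro k M hM i l
  have hrows (j : n) : ∑ p : Fin k × n, star (M p.1 p.2 j) • (M p.1).row p.2 ∈ N := by
    rw [Fintype.sum_prod_type' fun i l => star (M i l j) • (M i).row l,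
      ← row_sum_conjTranspose_mul_self]
    exact hM j
  exact hN.mem_of_fintype hrows (i, l)

theorem IsRealSet.isRealVectorSet_of_matrix [StarAddMonoid A] [Fintype n] [Nonempty n]
    {N : Set (n → A)} (hN : IsRealSet {F : Matrix n n A | ∀ i, F.row i ∈ N}) :
    IsRealVectorSet N := by
  classical
  intro k f hf i
  let r : n := Classical.arbitrary n
  have hrows (j : n) : (∑ i, (updateRow 0 r (f i))ᴴ * updateRow 0 r (f i)).row j ∈ N := by
    simp only [row_sum_conjTranspose_mul_self, sum_star_smul_row_updateRow_zero]
    exact hf j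
  have hmem : (updateRow 0 r (f i)).row r ∈ N := hN k (fun i => updateRow 0 r (f i)) hrows i r
  rwa [row_apply', updateRow_self] at hmem

theorem real_submodule_iff_real_matrix_ideal_general [StarAddMonoid A] [Fintype n]
    {N : Set (n → A)} (hzero : 0 ∈ N) :
    IsRealVectorSet N ↔ IsRealSet {F : Matrix n n A | ∀ i, F.row i ∈ N} := by
  refine ⟨IsRealVectorSet.isRealSet_matrix, fun hN => ?_⟩
  cases isEmpty_or_nonempty n
  · intro _ f _ i
    rwa [Subsingleton.elim (f i) 0]
  · exact hN.isRealVectorSet_of_matrix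

end

/-- **Proposition 2.** Let `A` be a ring with involution, `N ≤ A^n` a submodule, and
`I` the left ideal of `Mₙ(A)` consisting of all matrices whose rows all lie in `N`.
Then `N` is real iff `I` is real. -/
theorem real_submodule_iff_real_matrix_ideal {A : Type*} [Ring A] [StarRing A] {n : ℕ}
    (N : Submodule A (Fin n → A)) (I : Ideal (Matrix (Fin n) (Fin n) A))
    (hI : ∀ F : Matrix (Fin n) (Fin n) A, F ∈ I ↔ ∀ i, (fun j => F i j) ∈ N) :
    N.IsRealSubmoduleStar ↔ I.IsRealLeftIdealH := by
  have hI_rows : (I : Set (Matrix (Fin n) (Fin n) A)) = {F | ∀ i, F.row i ∈ (N : Set _)} :=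
    Set.ext hI
  change IsRealVectorSet (N : Set (Fin n → A)) ↔ IsRealSet (I : Set (Matrix (Fin n) (Fin n) A))
  exact hI_rows ▸ real_submodule_iff_real_matrix_ideal_general N.zero_mem
end

section
/- (Proposition 3, claim (2)) Let F be a field, D a finite-dimensional division algebra over F whose center is F, R a commutative F-algebra, and D_R = D ⊗_F R. Let N be a D_R-submodule of M = (D_R)^n. Then N is a prime submodule of M as a D_R-module if and only if N, viewed by restriction of scalars as an R-submodule of M, is a prime submodule of M as an R-module (i.e., for every r ∈ R and m ∈ M with r·m ∈ N, either r·M ⊆ N or m ∈ N). -/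
open TensorProduct

/-!
A submodule `N` of a `B`-module `M` is prime iff `(N : B m) ≤ (N : M)` for every `m ∉ N`, and
`(N : B m)` is a two-sided ideal. When `B = A ⊗ R` for a central simple `F`-algebra `A`, every
two-sided ideal is generated by its elements of the form `1 ⊗ r`, so this inclusion can be tested on
them. As these elements are central, `1 ⊗ r` lies in `(N : B m)` iff `(1 ⊗ r) • m ∈ N`.

Two-sided ideals of `A ⊗ R` are stable under `f ⊗ id` for every `F`-linear `f : A → A`: by Jacobson
density for the simple `A ⊗ Aᵐᵒᵖ`-module `A`, whose endomorphisms are the scalars from `F`, such an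
`f` agrees with some `x ↦ ∑ aᵢ x bᵢ` on any given finite set. Taking for `f` the coordinate
functions of a basis of `A` extracts the generators `1 ⊗ r`.
-/

section Colon

variable {A M : Type*} [Ring A] [AddCommGroup M] [Module A M] {N : Submodule A M}

theorem mem_colon_span_singleton_iff_forall_mul_smul_mem {a : A} {m : M} :
    a ∈ N.colon (Submodule.span A {m} : Set M) ↔ ∀ x : A, (a * x) • m ∈ N := by
  simp only [Submodule.mem_colon, SetLike.mem_coe, Submodule.mem_span_singleton,
    forall_exists_index, forall_apply_eq_imp_iff, mul_smul]

theorem mem_colon_span_singleton_iff_smul_mem_of_mem_center {a : A} (ha : a ∈ Subring.center A)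
    {m : M} : a ∈ N.colon (Submodule.span A {m} : Set M) ↔ a • m ∈ N := by
  rw [mem_colon_span_singleton_iff_forall_mul_smul_mem]
  refine ⟨fun h ↦ by simpa only [mul_one] using h 1, fun h x ↦ ?_⟩
  rw [← Subring.mem_center_iff.mp ha x, mul_smul]
  exact N.smul_mem x h

theorem mem_colon_univ_iff {a : A} : a ∈ N.colon Set.univ ↔ ∀ m : M, a • m ∈ N := by
  simp only [Submodule.mem_colon, Set.mem_univ, true_imp_iff]

theorem isPrimeSubmodule_iff_colon_span_singleton_le_colon_univ :
    N.IsPrimeSubmodule ↔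
      ∀ m ∉ N, N.colon (Submodule.span A {m} : Set M) ≤ N.colon Set.univ := by
  simp only [Submodule.IsPrimeSubmodule, ← mem_colon_span_singleton_iff_forall_mul_smul_mem,
    SetLike.le_def, or_iff_not_imp_right, ← mem_colon_univ_iff]
  exact ⟨fun h m hm a ha ↦ h a m ha hm, fun h a m ha hm ↦ h m hm ha⟩

end Colon

section Density

variable (F A : Type*) [CommRing F] [Ring A] [Algebra F A]

attribute [local instance] instModuleTensorProductMop

theorem isSimpleModule_tensorProduct_mulOpposite [IsSimpleRing A] :
    IsSimpleModule (A ⊗[F] Aᵐᵒᵖ) A := by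
  rw [isSimpleModule_iff]
  refine { eq_bot_or_eq_top := fun W ↦ ?_ }
  have mul_mul_mem (a b : A) {x : A} (hx : x ∈ W) : a * x * b ∈ W := by
    simpa [TensorProduct.Algebra.smul_def, mul_assoc] using
      W.smul_mem (a ⊗ₜ[F] MulOpposite.op b) hx
  let I : TwoSidedIdeal A := .mk' W W.zero_mem W.add_mem W.neg_mem
    (fun {a x} hx ↦ by simpa using mul_mul_mem a 1 hx)
    (fun {x b} hx ↦ by simpa using mul_mul_mem 1 b hx)
  have coe_I : (I : Set A) = W := TwoSidedIdeal.coe_mk' ..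
  refine (eq_bot_or_eq_top I).imp (fun hI ↦ ?_) (fun hI ↦ ?_) <;>
    exact SetLike.coe_injective (by rw [← coe_I, hI]; rfl)

variable {F A}

theorem exists_forall_apply_eq_smul_of_tensorProduct_mulOpposite [Algebra.IsCentral F A]
    (g : Module.End (A ⊗[F] Aᵐᵒᵖ) A) : ∃ c : F, ∀ x, g x = c • x := by
  have map_mul_mul (a b x : A) : g (a * x * b) = a * g x * b := by
    simpa [TensorProduct.Algebra.smul_def, mul_assoc] using
      g.map_smul (a ⊗ₜ[F] MulOpposite.op b) x
  have apply_eq_mul (x : A) : g x = x * g 1 := by simpa using map_mul_mul x 1 1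
  have apply_eq_mul' (x : A) : g x = g 1 * x := by simpa using map_mul_mul 1 x 1
  have apply_one_mem_center : g 1 ∈ Subalgebra.center F A :=
    Subalgebra.mem_center_iff.mpr fun x ↦ by rw [← apply_eq_mul, ← apply_eq_mul']
  obtain ⟨c, hc⟩ := (Algebra.IsCentral.mem_center_iff F).mp apply_one_mem_center
  exact ⟨c, fun x ↦ by rw [apply_eq_mul', hc, Algebra.smul_def]⟩

theorem exists_mulLeftRight_eqOn_finset [IsSimpleRing A] [Algebra.IsCentral F A]
    (f : Module.End F A) (s : Finset A) :
    ∃ t : A ⊗[F] Aᵐᵒᵖ, ∀ x ∈ s, AlgHom.mulLeftRight F A t x = f x := by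
  have := isSimpleModule_tensorProduct_mulOpposite F A
  let f' : Module.End (Module.End (A ⊗[F] Aᵐᵒᵖ) A) A :=
    { f with
      map_smul' := fun g x ↦ by
        obtain ⟨c, hc⟩ := exists_forall_apply_eq_smul_of_tensorProduct_mulOpposite g
        simp [hc] }
  obtain ⟨t, ht⟩ := jacobson_density f' s
  exact ⟨t, fun x hx ↦ (ht x hx).symm⟩

end Density

section TwoSidedIdeal

variable {F A R : Type*} [Ring A] [Ring R]

section CommRing

variable [CommRing F] [Algebra F A] [Algebra F R]

theorem rTensor_mulLeftRight_tmul (x : A) (y : Aᵐᵒᵖ) (a : A ⊗[F] R) :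
    (AlgHom.mulLeftRight F A (x ⊗ₜ y)).rTensor R a =
      (x ⊗ₜ[F] (1 : R)) * a * (y.unop ⊗ₜ[F] (1 : R)) := by
  induction a with
  | zero => simp
  | add a b ha hb => rw [map_add, ha, hb, mul_add, add_mul]
  | tmul d r => simp

variable {I : Ideal (A ⊗[F] R)} [I.IsTwoSided] {a : A ⊗[F] R}

theorem rTensor_mulLeftRight_mem (ha : a ∈ I) (t : A ⊗[F] Aᵐᵒᵖ) :
    (AlgHom.mulLeftRight F A t).rTensor R a ∈ I := by
  induction t with
  | zero => simp
  | add t u ht hu =>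
    rw [map_add, LinearMap.rTensor_add, LinearMap.add_apply]
    exact I.add_mem ht hu
  | tmul x y =>
    rw [rTensor_mulLeftRight_tmul]
    exact I.mul_mem_right _ (I.mul_mem_left _ ha)

theorem rTensor_mem_of_isTwoSided [IsSimpleRing A] [Algebra.IsCentral F A] (ha : a ∈ I)
    (f : Module.End F A) : f.rTensor R a ∈ I := by
  classical
  obtain ⟨s, rfl⟩ := TensorProduct.exists_finset a
  obtain ⟨t, ht⟩ := exists_mulLeftRight_eqOn_finset f (s.image Prod.fst)
  convert rTensor_mulLeftRight_mem ha t using 1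
  simp only [map_sum, LinearMap.rTensor_tmul]
  exact Finset.sum_congr rfl fun p hp ↦ by rw [ht _ (Finset.mem_image_of_mem _ hp)]

end CommRing

variable [Field F] [Algebra F A] [Algebra F R] [IsSimpleRing A] [Algebra.IsCentral F A]

open Algebra.TensorProduct (includeRight)

theorem map_comap_includeRight_of_isTwoSided (I : Ideal (A ⊗[F] R)) [I.IsTwoSided] :
    (I.comap (includeRight : R →ₐ[F] A ⊗[F] R)).map (includeRight : R →ₐ[F] A ⊗[F] R) = I := by
  refine le_antisymm Ideal.map_comap_le fun a ha ↦ ?_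
  let b := Module.Free.chooseBasis F A
  obtain ⟨c, rfl⟩ := TensorProduct.eq_repr_basis_left b a
  have coord_mem (i) : (1 : A) ⊗ₜ[F] c i ∈ I := by
    classical
    convert rTensor_mem_of_isTwoSided ha ((b.coord i).smulRight 1) using 1
    simp [Finsupp.sum, Finsupp.single_apply, ite_smul, ite_tmul]
  refine Submodule.sum_mem _ fun i _ ↦ ?_
  have tmul_eq_mul : b i ⊗ₜ[F] c i = (b i ⊗ₜ[F] (1 : R)) * includeRight (c i) := by simp
  simp only [tmul_eq_mul]
  exact Ideal.mul_mem_left _ _ (Ideal.mem_map_of_mem _ (coord_mem i))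

theorem comap_includeRight_le_comap_includeRight_iff {I J : Ideal (A ⊗[F] R)} [I.IsTwoSided] :
    I.comap (includeRight : R →ₐ[F] A ⊗[F] R) ≤ J.comap (includeRight : R →ₐ[F] A ⊗[F] R) ↔
      I ≤ J := by
  rw [← Ideal.map_le_iff_le_comap, map_comap_includeRight_of_isTwoSided]

end TwoSidedIdeal

theorem one_tmul_mem_center {F A R : Type*} [CommRing F] [Ring A] [Algebra F A] [CommRing R]
    [Algebra F R] (r : R) : (1 : A) ⊗ₜ[F] r ∈ Subring.center (A ⊗[F] R) :=
  Algebra.TensorProduct.includeRight_map_center_le F A R ⟨r, by simp, rfl⟩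

theorem primeSubmodule_iff_prime_restrictScalars_general {F A R M : Type*} [Field F] [Ring A]
    [Algebra F A] [IsSimpleRing A] [Algebra.IsCentral F A] [CommRing R] [Algebra F R]
    [AddCommGroup M] [Module (A ⊗[F] R) M] (N : Submodule (A ⊗[F] R) M) :
    N.IsPrimeSubmodule ↔
      ∀ (r : R) (m : M), ((1 : A) ⊗ₜ[F] r) • m ∈ N →
        (∀ m' : M, ((1 : A) ⊗ₜ[F] r) • m' ∈ N) ∨ m ∈ N := by
  have colon_le_iff (m : M) :
      N.colon (Submodule.span (A ⊗[F] R) {m} : Set M) ≤ N.colon Set.univ ↔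
        ∀ r : R, ((1 : A) ⊗ₜ[F] r) • m ∈ N → ∀ m' : M, ((1 : A) ⊗ₜ[F] r) • m' ∈ N := by
    rw [← comap_includeRight_le_comap_includeRight_iff]
    exact forall_congr' fun r ↦ imp_congr
      (mem_colon_span_singleton_iff_smul_mem_of_mem_center (one_tmul_mem_center r))
      mem_colon_univ_iff
  simp only [isPrimeSubmodule_iff_colon_span_singleton_le_colon_univ, colon_le_iff,
    or_iff_not_imp_right]
  exact ⟨fun h r m hr hm ↦ h m hm r hr, fun h m hm r hr ↦ h r m hr hm⟩

/-- **Proposition 3, claim (2).** Let `D` be a finite-dimensional central division algebra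
over a field `F`, `R` a commutative `F`-algebra and `D_R = D ⊗_F R`.  A `D_R`-submodule `N`
of `M = (D_R)^n` is prime as a `D_R`-submodule iff it is prime as an `R`-submodule of `M`
(where `r ∈ R` acts on `M` through the element `1 ⊗ r` of `D_R`), i.e. iff for every
`r ∈ R` and `m ∈ M` with `r • m ∈ N`, either `r • M ⊆ N` or `m ∈ N`. -/
theorem primeSubmodule_iff_prime_restrictScalars
    (F : Type*) [Field F] (D : Type*) [DivisionRing D] [Algebra F D]
    [FiniteDimensional F D] [Algebra.IsCentral F D]
    (R : Type*) [CommRing R] [Algebra F R] {n : ℕ}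
    (N : Submodule (D ⊗[F] R) (Fin n → D ⊗[F] R)) :
    N.IsPrimeSubmodule ↔
      (∀ (r : R) (m : Fin n → D ⊗[F] R),
        ((1 : D) ⊗ₜ[F] r) • m ∈ N →
          (∀ m' : Fin n → D ⊗[F] R, ((1 : D) ⊗ₜ[F] r) • m' ∈ N) ∨ m ∈ N) :=
  primeSubmodule_iff_prime_restrictScalars_general N
end
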